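/- Fix 1/2 < σ₀ < 1 and a nonnegative integer m. For almost all ω ∈ Ω, the identity ∑_{n=2}^∞ Λ(n) ω(n) / (n^s (log n)^{m+1}) = ∑_p Li_{m+1}(p^{-s} ω(p)) / (log p)^m holds for all s with Re(s) > σ₀, where the right-hand sum is over primes p. -/

import Mathlib

open Complex MeasureTheory Filter

noncomputable instance : MeasurableSpace Circle := borel Circle
instance : BorelSpace Circle := ⟨rfl⟩

/-- `ω(n) = ∏_{p^r ∥ n} ω(p)^r` for `ω` a point of `∏_p γ_p`. -/
noncomputable def omegaMul (ω : Nat.Primes → Circle) (n : ℕ) : ℂ :=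
  ∏ p ∈ n.primeFactors,
    if h : p.Prime then ((ω ⟨p, h⟩ : ℂ) ^ (n.factorization p)) else 1

/-- The polylogarithm `Li_{m+1}(z) = ∑_{k=1}^∞ z^k / k^{m+1}` for `|z| < 1`. -/
noncomputable def polylog (m : ℕ) (z : ℂ) : ℂ :=
  ∑' k : ℕ, z ^ (k + 1) / ((k : ℂ) + 1) ^ (m + 1)

/-!
By uniqueness of Haar measure, a Haar probability measure on a product of circles is the product of
its marginals, so for `σ > 1/2` the variables `p ^ (-σ) ω(p) / (log p) ^ m` are independent, centred
and square summable, and by the Khinchin–Kolmogorov theorem their sum over the primes converges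
almost surely. A Dirichlet series converging at `σ` converges in the half-plane `Re s > σ`; letting
`σ` decrease to `1/2` along a countable set gives almost surely the convergence of
`∑ p ^ (-s) ω(p) / (log p) ^ m` whenever `Re s > 1/2`. This is the contribution of the primes
themselves to both sides. The higher prime powers contribute an absolutely convergent double series,
which one side sums along `n = p ^ k` and the other first over `k` and then over `p`.
-/

open ProbabilityTheory Topology

section RandomSeries

variable {Ω : Type*} [MeasurableSpace Ω] {μ : Measure Ω}

theorem martingale_sum_of_iIndepFun {E : Type*} [NormedAddCommGroup E] [NormedSpace ℝ E]
    [CompleteSpace E] [SecondCountableTopology E] [MeasurableSpace E] [BorelSpace E]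
    {X : ℕ → Ω → E} (hX : ∀ n, StronglyMeasurable (X n)) (hint : ∀ n, Integrable (X n) μ)
    (hindep : iIndepFun X μ) (hmean : ∀ n, ∫ ω, X n ω ∂μ = 0) :
    Martingale (fun n ↦ ∑ i ∈ Finset.range (n + 1), X i) (Filtration.natural X hX) μ := by
  have := hindep.isProbabilityMeasure
  refine martingale_of_condExp_sub_eq_zero_nat (fun n ↦ ?_)
    (fun n ↦ integrable_finsetSum' _ fun i _ ↦ hint i) fun n ↦ ?_
  · refine Finset.stronglyMeasurable_sum _ fun i hi ↦ ?_
    exact (Filtration.stronglyAdapted_natural hX i).mono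
      ((Filtration.natural X hX).mono (Finset.mem_range_succ_iff.mp hi))
  · rw [Finset.sum_range_succ _ (n + 1), add_sub_cancel_left]
    filter_upwards [hindep.condExp_natural_ae_eq_of_lt hX n.lt_succ_self] with ω hω
    rw [hω, hmean, Pi.zero_apply]

theorem eLpNorm_one_le_one_add_variance [IsProbabilityMeasure μ] {Y : Ω → ℝ} (hY : MemLp Y 2 μ)
    (hmean : ∫ ω, Y ω ∂μ = 0) : eLpNorm Y 1 μ ≤ ENNReal.ofReal (1 + Var[Y; μ]) := by
  have hint : Integrable Y μ := hY.integrable one_le_two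
  rw [eLpNorm_one_eq_lintegral_enorm, ← ofReal_integral_norm_eq_lintegral_enorm hint,
    variance_of_integral_eq_zero hint.aemeasurable hmean]
  refine ENNReal.ofReal_le_ofReal ?_
  calc ∫ ω, ‖Y ω‖ ∂μ ≤ ∫ ω, (1 + Y ω ^ 2) ∂μ :=
        integral_mono hint.norm ((integrable_const 1).add hY.integrable_sq) fun ω ↦ by
          nlinarith [Real.norm_eq_abs (Y ω), sq_abs (Y ω), sq_nonneg (|Y ω| - 1)]
    _ = 1 + ∫ ω, Y ω ^ 2 ∂μ := by
        simp [integral_add (integrable_const (1 : ℝ)) hY.integrable_sq]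

theorem ae_exists_tendsto_sum_of_iIndepFun {X : ℕ → Ω → ℝ} (hX : ∀ n, StronglyMeasurable (X n))
    (hL2 : ∀ n, MemLp (X n) 2 μ) (hindep : iIndepFun X μ) (hmean : ∀ n, ∫ ω, X n ω ∂μ = 0)
    (hvar : Summable fun n ↦ Var[X n; μ]) :
    ∀ᵐ ω ∂μ, ∃ l, Tendsto (fun N ↦ ∑ n ∈ Finset.range N, X n ω) atTop (𝓝 l) := by
  have := hindep.isProbabilityMeasure
  have hint n : Integrable (X n) μ := (hL2 n).integrable one_le_two
  have hsum_mean N : ∫ ω, (∑ n ∈ Finset.range N, X n) ω ∂μ = 0 := by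
    simp_rw [Finset.sum_apply]
    rw [integral_finsetSum _ fun n _ ↦ hint n, Finset.sum_eq_zero fun n _ ↦ hmean n]
  have hsum_var N : Var[∑ n ∈ Finset.range N, X n; μ] ≤ ∑' n, Var[X n; μ] := by
    rw [IndepFun.variance_sum (fun n _ ↦ hL2 n) fun i _ j _ hij ↦ hindep.indepFun hij]
    exact hvar.sum_le_tsum _ fun n _ ↦ variance_nonneg _ _
  have hbdd N : eLpNorm (∑ n ∈ Finset.range (N + 1), X n) 1 μ
      ≤ (1 + ∑' n, Var[X n; μ]).toNNReal :=
    (eLpNorm_one_le_one_add_variance (memLp_finsetSum' _ fun n _ ↦ hL2 n) (hsum_mean _)).trans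
      (ENNReal.ofReal_le_ofReal (add_le_add_right (hsum_var _) 1))
  filter_upwards [(martingale_sum_of_iIndepFun hX hint hindep hmean).submartingale
    |>.exists_ae_tendsto_of_bdd hbdd] with ω ⟨l, hl⟩
  simp_rw [Finset.sum_apply] at hl
  exact ⟨l, (tendsto_add_atTop_iff_nat 1).mp hl⟩

theorem ae_exists_tendsto_sum_of_iIndepFun_complex {X : ℕ → Ω → ℂ}
    (hX : ∀ n, StronglyMeasurable (X n)) (hL2 : ∀ n, MemLp (X n) 2 μ) (hindep : iIndepFun X μ)
    (hmean : ∀ n, ∫ ω, X n ω ∂μ = 0) (hsq : Summable fun n ↦ ∫ ω, ‖X n ω‖ ^ 2 ∂μ) :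
    ∀ᵐ ω ∂μ, ∃ l, Tendsto (fun N ↦ ∑ n ∈ Finset.range N, X n ω) atTop (𝓝 l) := by
  have := hindep.isProbabilityMeasure
  have hint n : Integrable (X n) μ := (hL2 n).integrable one_le_two
  have hclm (T : ℂ →L[ℝ] ℝ) (hT : ∀ z, |T z| ≤ ‖z‖) :
      ∀ᵐ ω ∂μ, ∃ l, Tendsto (fun N ↦ ∑ n ∈ Finset.range N, T (X n ω)) atTop (𝓝 l) := by
    have hTL2 n : MemLp (fun ω ↦ T (X n ω)) 2 μ := T.comp_memLp' (hL2 n)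
    have hTmean n : ∫ ω, T (X n ω) ∂μ = 0 := by
      rw [T.integral_comp_comm (hint n), hmean, map_zero]
    refine ae_exists_tendsto_sum_of_iIndepFun
      (fun n ↦ T.continuous.comp_stronglyMeasurable (hX n)) hTL2
      (hindep.comp _ fun _ ↦ T.continuous.measurable) hTmean
      (hsq.of_nonneg_of_le (fun n ↦ variance_nonneg _ _) fun n ↦ ?_)
    rw [variance_of_integral_eq_zero (hTL2 n).aemeasurable (hTmean n)]
    exact integral_mono (hTL2 n).integrable_sq ((hL2 n).integrable_norm_pow two_ne_zero)
      fun ω ↦ sq_le_sq.mpr ((hT _).trans (le_abs_self _))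
  filter_upwards [hclm reCLM abs_re_le_norm, hclm imCLM abs_im_le_norm] with ω ⟨a, ha⟩ ⟨b, hb⟩
  refine ⟨equivRealProdCLM.symm (a, b),
    ((equivRealProdCLM.symm.continuous.tendsto _).comp (ha.prodMk_nhds hb)).congr fun N ↦ ?_⟩
  apply Complex.ext <;> simp

end RandomSeries

section HaarProduct

variable {ι : Type*} {G : ι → Type*} [∀ i, Group (G i)] [∀ i, MeasurableSpace (G i)]

theorem isMulLeftInvariant_infinitePi [∀ i, MeasurableMul (G i)] (ν : ∀ i, Measure (G i))
    [∀ i, IsProbabilityMeasure (ν i)] [∀ i, (ν i).IsMulLeftInvariant] :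
    (Measure.infinitePi ν).IsMulLeftInvariant := by
  refine ⟨fun g ↦ ?_⟩
  have h := Measure.infinitePi_map_pi ν fun i ↦ measurable_const_mul (g i)
  simp_rw [map_mul_left_eq_self] at h
  exact h

theorem iIndepFun_eval_of_isHaarMeasure [Countable ι] [∀ i, TopologicalSpace (G i)]
    [∀ i, IsTopologicalGroup (G i)] [∀ i, CompactSpace (G i)]
    [∀ i, SecondCountableTopology (G i)] [∀ i, BorelSpace (G i)] (μ : Measure (∀ i, G i))
    [IsProbabilityMeasure μ] [μ.IsHaarMeasure] : iIndepFun (fun i (ω : ∀ i, G i) ↦ ω i) μ := by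
  have hprob i : IsProbabilityMeasure (μ.map fun ω ↦ ω i) :=
    Measure.isProbabilityMeasure_map (measurable_pi_apply i).aemeasurable
  have hinv i : (μ.map fun ω ↦ ω i).IsMulLeftInvariant :=
    isMulLeftInvariant_map (Pi.evalMonoidHom G i).toMulHom (measurable_pi_apply i)
      (Function.surjective_eval i)
  have hprod_inv := isMulLeftInvariant_infinitePi fun i ↦ μ.map fun ω ↦ ω i
  have hprod_haar : (Measure.infinitePi fun i ↦ μ.map fun ω ↦ ω i).IsHaarMeasure :=
    Measure.isHaarMeasure_of_isCompact_nonempty_interior _ Set.univ isCompact_univ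
      (by simp) (by simp) (by simp)
  rw [iIndepFun_iff_map_fun_eq_infinitePi_map measurable_pi_apply, Measure.map_id']
  exact Measure.isHaarMeasure_eq_of_isProbabilityMeasure _ _

end HaarProduct

section PrimeSums

variable {E : Type*}

/-- Extension by zero of a function on the primes to `ℕ`, so that sums over the primes below `N`
are sums over `Finset.range N`. -/
def extendPrimes [Zero E] (c : Nat.Primes → E) (n : ℕ) : E :=
  if h : n.Prime then c ⟨n, h⟩ else 0

theorem extendPrimes_coe [Zero E] (c : Nat.Primes → E) (p : Nat.Primes) :
    extendPrimes c p = c p :=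
  dif_pos p.2

theorem extendPrimes_of_not_prime [Zero E] (c : Nat.Primes → E) {n : ℕ} (hn : ¬ n.Prime) :
    extendPrimes c n = 0 :=
  dif_neg hn

theorem hasSum_extendPrimes [AddCommMonoid E] [TopologicalSpace E] {c : Nat.Primes → E} {a : E}
    (hc : HasSum c a) : HasSum (extendPrimes c) a := by
  refine (Nat.Primes.coe_nat_injective.hasSum_iff fun n hn ↦ ?_).mp ?_
  · exact extendPrimes_of_not_prime c fun h ↦ hn ⟨⟨n, h⟩, rfl⟩
  · exact hc.congr_fun (extendPrimes_coe c)

/-- The `k`-th prime, counted from `0`. -/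
noncomputable def nthPrime (k : ℕ) : Nat.Primes :=
  ⟨Nat.nth Nat.Prime k, Nat.prime_nth_prime k⟩

theorem nthPrime_injective : Function.Injective nthPrime := fun _ _ h ↦
  Nat.nth_injective Nat.infinite_setOfPred_prime (congrArg Subtype.val h)

theorem sum_range_extendPrimes [AddCommMonoid E] (c : Nat.Primes → E) (N : ℕ) :
    ∑ n ∈ Finset.range N, extendPrimes c n
      = ∑ k ∈ Finset.range (Nat.primeCounting' N), c (nthPrime k) := by
  induction N with
  | zero => simp [Nat.primeCounting']
  | succ N ih =>
    rw [Finset.sum_range_succ, ih]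
    by_cases hN : N.Prime
    · have hp : (⟨N, hN⟩ : Nat.Primes) = nthPrime (Nat.primeCounting' N) :=
        Subtype.ext (Nat.nth_count hN).symm
      rw [Nat.primeCounting', Nat.count_succ, if_pos hN, Finset.sum_range_succ,
        extendPrimes, dif_pos hN, hp, Nat.primeCounting']
    · rw [Nat.primeCounting', Nat.count_succ, if_neg hN, extendPrimes_of_not_prime c hN, add_zero,
        add_zero]

end PrimeSums

theorem integral_eval_circle_eq_zero {ι : Type*} (μ : Measure (ι → Circle))
    [μ.IsMulLeftInvariant] (i : ι) : ∫ ω, (ω i : ℂ) ∂μ = 0 :=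
  integral_eq_zero_of_mul_left_eq_neg (g := fun _ ↦ (-1 : Circle)) fun ω ↦ by simp

theorem ae_exists_tendsto_sum_extendPrimes_mul (μ : Measure (Nat.Primes → Circle))
    [IsProbabilityMeasure μ] [μ.IsHaarMeasure] {a : Nat.Primes → ℂ}
    (ha : Summable fun p ↦ ‖a p‖ ^ 2) :
    ∀ᵐ ω ∂μ, ∃ l, Tendsto
      (fun N ↦ ∑ n ∈ Finset.range N, extendPrimes (fun p ↦ a p * ω p) n) atTop (𝓝 l) := by
  let X (k : ℕ) (ω : Nat.Primes → Circle) : ℂ := a (nthPrime k) * ω (nthPrime k)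
  have hX k : StronglyMeasurable (X k) := Continuous.stronglyMeasurable (by fun_prop)
  have hnorm k ω : ‖X k ω‖ = ‖a (nthPrime k)‖ := by simp [X, Circle.norm_coe]
  have hindep : iIndepFun X μ :=
    ((iIndepFun_eval_of_isHaarMeasure μ).precomp nthPrime_injective).comp
      (fun k z ↦ a (nthPrime k) * (z : ℂ)) fun k ↦ Continuous.measurable (by fun_prop)
  have hmean k : ∫ ω, X k ω ∂μ = 0 := by
    simp only [X, integral_const_mul, integral_eval_circle_eq_zero, mul_zero]
  have hsq : Summable fun k ↦ ∫ ω, ‖X k ω‖ ^ 2 ∂μ := by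
    simpa [hnorm, Function.comp_def] using ha.comp_injective nthPrime_injective
  filter_upwards [ae_exists_tendsto_sum_of_iIndepFun_complex hX (fun k ↦
    MemLp.of_bound (hX k).aestronglyMeasurable _ (ae_of_all μ fun ω ↦ (hnorm k ω).le))
    hindep hmean hsq] with ω ⟨l, hl⟩
  refine ⟨l, ?_⟩
  simp_rw [sum_range_extendPrimes]
  exact hl.comp Nat.tendsto_primeCounting'

theorem exists_tendsto_sum_cpow_mul_of_bounded {c : ℕ → ℂ} (hc0 : c 0 = 0) {C : ℝ}
    (hC : ∀ N, ‖∑ n ∈ Finset.range N, c n‖ ≤ C) {w : ℂ} (hw : 0 < w.re) :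
    ∃ l, Tendsto (fun N : ℕ ↦ ∑ n ∈ Finset.range N, (n : ℂ) ^ (-w) * c n) atTop (𝓝 l) := by
  have hre : (-w).re < 0 := neg_neg_of_pos hw
  have hw0 : -w ≠ 0 := fun h ↦ by simp [h] at hre
  have hCI (N : ℕ) : ‖∑ n ∈ Finset.Icc 0 N, c n‖ ≤ C := by
    rw [← Nat.range_succ_eq_Icc_zero]
    exact hC (N + 1)
  have hdecay : Tendsto (fun t : ℝ ↦ (t : ℂ) ^ (-w)) atTop (𝓝 0) :=
    tendsto_zero_iff_norm_tendsto_zero.mpr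
      ((tendsto_rpow_neg_atTop hw).congr' (norm_ofReal_cpow_eventually_eq_atTop (-w)).symm)
  have hboundary : Tendsto (fun N : ℕ ↦ ((N : ℝ) : ℂ) ^ (-w) * ∑ n ∈ Finset.Icc 0 N, c n) atTop
      (𝓝 0) :=
    (hdecay.comp tendsto_natCast_atTop_atTop).zero_mul_isBoundedUnder_le
      (isBoundedUnder_of_eventually_le (.of_forall hCI))
  have hdom : (fun t : ℝ ↦ deriv (fun x : ℝ ↦ (x : ℂ) ^ (-w)) t * ∑ n ∈ Finset.Icc 0 ⌊t⌋₊, c n)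
      =O[atTop] fun t ↦ t ^ ((-w).re - 1) := by
    have hsum : (fun t : ℝ ↦ ∑ n ∈ Finset.Icc 0 ⌊t⌋₊, c n) =O[atTop] fun _ ↦ (1 : ℝ) :=
      .of_bound C (.of_forall fun t ↦ by simpa using hCI ⌊t⌋₊)
    simpa only [mul_one] using (isBigO_deriv_ofReal_cpow_const_atTop (-w)).mul hsum
  have := tendsto_sum_mul_atTop_nhds_one_sub_integral₀ c hc0
    (fun t ht ↦ differentiableAt_id.ofReal_cpow_const (zero_lt_one.trans_le ht).ne' hw0)
    (((integrableOn_Ici_iff_integrableOn_Ioi).mpr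
      (integrableOn_Ioi_deriv_ofReal_cpow zero_lt_one hre)).locallyIntegrableOn)
    hboundary hdom (integrableAtFilter_rpow_atTop_iff.mpr (by linarith))
  refine ⟨_, (tendsto_add_atTop_iff_nat 1).mp (this.congr fun N ↦ ?_)⟩
  rw [Nat.range_succ_eq_Icc_zero]
  rfl

theorem injective_primes_pow_add_two :
    Function.Injective fun x : Nat.Primes × ℕ ↦ (x.1 : ℕ) ^ (x.2 + 2) :=
  (Subtype.val_injective.comp Nat.Primes.prodNatEquiv.injective).comp
    (Function.injective_id.prodMap (add_left_injective 1))

theorem hasSum_ite_prime_zero {E : Type*} [AddCommMonoid E] [TopologicalSpace E] {f : ℕ → E}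
    (hf : ∀ n, ¬ IsPrimePow n → f n = 0) {T : E}
    (hT : HasSum (fun x : Nat.Primes × ℕ ↦ f (x.1 ^ (x.2 + 2))) T) :
    HasSum (fun n ↦ if n.Prime then 0 else f n) T := by
  refine (injective_primes_pow_add_two.hasSum_iff fun n hn ↦ ?_).mp (hT.congr_fun fun x ↦ ?_)
  · by_contra hne
    obtain ⟨hprime, hfn⟩ : ¬ n.Prime ∧ f n ≠ 0 := by simpa using hne
    obtain ⟨p, k, hp, hk, rfl⟩ := (isPrimePow_nat_iff n).mp (not_imp_comm.mp (hf n) hfn)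
    have hk1 : k ≠ 1 := fun h ↦ hprime (by simpa [h] using hp)
    exact hn ⟨(⟨p, hp⟩, k - 2), by simp [Nat.sub_add_cancel (show 2 ≤ k by omega)]⟩
  · simp [Nat.Prime.not_prime_pow (Nat.le_add_left 2 x.2)]

theorem tendsto_sum_prime_pow_of_tendsto_sum_primes {E : Type*} [AddCommMonoid E]
    [TopologicalSpace E] [ContinuousAdd E] {f : ℕ → E} (hf : ∀ n, ¬ IsPrimePow n → f n = 0)
    {A T : E} (hT : HasSum (fun x : Nat.Primes × ℕ ↦ f (x.1 ^ (x.2 + 2))) T)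
    (hA : Tendsto (fun N ↦ ∑ n ∈ Finset.range N, extendPrimes (fun p ↦ f p) n) atTop (𝓝 A)) :
    Tendsto (fun N ↦ ∑ n ∈ Finset.range N, f n) atTop (𝓝 (A + T)) := by
  refine (hA.add (hasSum_ite_prime_zero hf hT).tendsto_sum_nat).congr fun N ↦ ?_
  rw [← Finset.sum_add_distrib]
  refine Finset.sum_congr rfl fun n _ ↦ ?_
  by_cases hn : n.Prime <;> simp [extendPrimes, hn]

theorem tendsto_sum_tsum_prime_pow_of_tendsto_sum_primes {E : Type*} [AddCommGroup E]
    [UniformSpace E] [IsUniformAddGroup E] [CompleteSpace E] [T2Space E] {f : ℕ → E} {A T : E}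
    (hT : HasSum (fun x : Nat.Primes × ℕ ↦ f (x.1 ^ (x.2 + 2))) T)
    (hA : Tendsto (fun N ↦ ∑ n ∈ Finset.range N, extendPrimes (fun p ↦ f p) n) atTop (𝓝 A)) :
    Tendsto
      (fun N ↦ ∑ n ∈ Finset.range N, extendPrimes (fun p ↦ ∑' k, f (p ^ (k + 1))) n)
      atTop (𝓝 (A + T)) := by
  have hfib (p : Nat.Primes) : Summable fun k ↦ f (p ^ (k + 2)) := hT.summable.prod_factor p
  have htail := hasSum_extendPrimes (hT.prod_fiberwise fun p ↦ (hfib p).hasSum)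
  refine (hA.add htail.tendsto_sum_nat).congr fun N ↦ ?_
  rw [← Finset.sum_add_distrib]
  refine Finset.sum_congr rfl fun n _ ↦ ?_
  by_cases hn : n.Prime
  · have hsum : Summable fun k ↦ f (n ^ (k + 1)) := (summable_nat_add_iff 1).mp (hfib ⟨n, hn⟩)
    simp [extendPrimes, hn, hsum.tsum_eq_zero_add, add_assoc]
  · simp [extendPrimes, hn]

section EtaSeries

theorem omegaMul_prime_pow (ω : Nat.Primes → Circle) (p : Nat.Primes) (k : ℕ) :
    omegaMul ω (p ^ (k + 1)) = (ω p : ℂ) ^ (k + 1) := by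
  rw [omegaMul, Nat.primeFactors_prime_pow k.succ_ne_zero p.2, Finset.prod_singleton, dif_pos p.2,
    p.2.factorization_pow, Finsupp.single_eq_same]
  rfl

/-- The `n`-th term of the von Mangoldt series of the random eta function. It vanishes for `n < 2`,
as `Λ` does, so that the series may start at `n = 0`. -/
noncomputable def etaTerm (ω : Nat.Primes → Circle) (m : ℕ) (s : ℂ) (n : ℕ) : ℂ :=
  (ArithmeticFunction.vonMangoldt n : ℂ) * omegaMul ω n /
    ((n : ℂ) ^ s * (((Real.log n) ^ (m + 1) : ℝ) : ℂ))

variable (ω : Nat.Primes → Circle) (m : ℕ) {s : ℂ}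

theorem etaTerm_of_not_isPrimePow (s : ℂ) {n : ℕ} (hn : ¬ IsPrimePow n) : etaTerm ω m s n = 0 := by
  simp [etaTerm, ArithmeticFunction.vonMangoldt_eq_zero_iff.mpr hn]

theorem etaTerm_prime_pow (s : ℂ) (p : Nat.Primes) (k : ℕ) :
    etaTerm ω m s (p ^ (k + 1)) =
      ((p : ℂ) ^ (-s) * ω p) ^ (k + 1) / ((k : ℂ) + 1) ^ (m + 1)
        / ((Real.log p ^ m : ℝ) : ℂ) := by
  have hlog : (Real.log p : ℂ) ≠ 0 :=
    ofReal_ne_zero.mpr (Real.log_pos (Nat.one_lt_cast.mpr p.2.one_lt)).ne'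
  have hp : (p : ℂ) ^ s ≠ 0 := by simp [cpow_eq_zero_iff, p.2.ne_zero]
  have hk : (k : ℂ) + 1 ≠ 0 := Nat.cast_add_one_ne_zero k
  have hcpow : (((p : ℕ) ^ (k + 1) : ℕ) : ℂ) ^ s = ((p : ℂ) ^ s) ^ (k + 1) := by
    rw [Nat.cast_pow, ← natCast_cpow_natCast_mul, ← cpow_nat_mul]
  rw [etaTerm, ArithmeticFunction.vonMangoldt_apply_pow k.succ_ne_zero,
    ArithmeticFunction.vonMangoldt_apply_prime p.2, omegaMul_prime_pow, hcpow, cpow_neg,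
    Nat.cast_pow, Real.log_pow]
  simp only [ofReal_pow, ofReal_mul, ofReal_natCast, Nat.cast_succ, ofReal_add, ofReal_one, mul_pow,
    inv_pow]
  field_simp
  ring

theorem etaTerm_prime (s : ℂ) (p : Nat.Primes) :
    etaTerm ω m s p = (p : ℂ) ^ (-s) * ω p / ((Real.log p ^ m : ℝ) : ℂ) := by
  simpa using etaTerm_prime_pow ω m s p 0

theorem tsum_etaTerm_prime_pow (s : ℂ) (p : Nat.Primes) :
    ∑' k, etaTerm ω m s (p ^ (k + 1)) =
      polylog m ((p : ℂ) ^ (-s) * ω p) / ((Real.log p ^ m : ℝ) : ℂ) := by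
  simp_rw [etaTerm_prime_pow, tsum_div_const, polylog]

theorem norm_div_log_prime_pow_le (p : Nat.Primes) (z : ℂ) :
    ‖z / ((Real.log p ^ m : ℝ) : ℂ)‖ ≤ (Real.log 2 ^ m)⁻¹ * ‖z‖ := by
  have hlog : Real.log 2 ≤ Real.log p :=
    Real.log_le_log two_pos (Nat.ofNat_le_cast.mpr p.2.two_le)
  rw [norm_div, norm_real, Real.norm_of_nonneg (by positivity), div_eq_inv_mul]
  gcongr

theorem norm_prime_cpow_neg (p : Nat.Primes) (s : ℂ) : ‖(p : ℂ) ^ (-s)‖ = (p : ℝ) ^ (-s.re) := by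
  rw [norm_natCast_cpow_of_pos p.2.pos, neg_re]

theorem norm_etaTerm_prime_pow_le (hs : 0 < s.re) (p : Nat.Primes) (k : ℕ) :
    ‖etaTerm ω m s (p ^ (k + 2))‖ ≤
      (Real.log 2 ^ m)⁻¹ * ((p : ℝ) ^ (-(2 * s.re)) * ((2 : ℝ) ^ (-s.re)) ^ k) := by
  have hbase : (p : ℝ) ^ (-s.re) ≤ 2 ^ (-s.re) :=
    Real.rpow_le_rpow_of_nonpos two_pos (Nat.ofNat_le_cast.mpr p.2.two_le) (neg_nonpos.mpr hs.le)
  have hsq : ((p : ℝ) ^ (-s.re)) ^ 2 = (p : ℝ) ^ (-(2 * s.re)) := by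
    rw [← Real.rpow_mul_natCast p.1.cast_nonneg]
    ring_nf
  have hdenom : (1 : ℝ) ≤ ‖((k + 1 : ℕ) : ℂ) + 1‖ ^ (m + 1) := by
    refine one_le_pow₀ ?_
    rw [← Nat.cast_add_one, norm_natCast, Nat.one_le_cast]
    omega
  rw [etaTerm_prime_pow ω m s p (k + 1)]
  refine (norm_div_log_prime_pow_le m p _).trans ?_
  gcongr
  calc _ ≤ ‖((p : ℂ) ^ (-s) * ω p) ^ (k + 2)‖ := by
        rw [norm_div, norm_pow (_ + 1)]
        exact div_le_self (norm_nonneg _) hdenom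
    _ = ((p : ℝ) ^ (-s.re)) ^ 2 * ((p : ℝ) ^ (-s.re)) ^ k := by
        rw [norm_pow, norm_mul, Circle.norm_coe, mul_one, norm_prime_cpow_neg, add_comm, pow_add]
    _ ≤ _ := by
        rw [hsq]
        gcongr

theorem summable_etaTerm_prime_pow (hs : 1 / 2 < s.re) :
    Summable fun x : Nat.Primes × ℕ ↦ etaTerm ω m s (x.1 ^ (x.2 + 2)) := by
  have hs0 : 0 < s.re := one_half_pos.trans hs
  have hprimes : Summable fun p : Nat.Primes ↦ (p : ℝ) ^ (-(2 * s.re)) :=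
    Nat.Primes.summable_rpow.mpr (by linarith)
  have hgeom : Summable fun k : ℕ ↦ ((2 : ℝ) ^ (-s.re)) ^ k :=
    summable_geometric_of_lt_one (by positivity)
      (Real.rpow_lt_one_of_one_lt_of_neg one_lt_two (neg_neg_of_pos hs0))
  exact .of_norm_bounded
    ((hprimes.mul_of_nonneg hgeom (fun _ ↦ by positivity) fun _ ↦ by positivity).mul_left _)
    fun x ↦ norm_etaTerm_prime_pow_le ω m hs0 x.1 x.2

theorem summable_sq_norm_prime_cpow_div_log {σ : ℝ} (hσ : 1 / 2 < σ) :
    Summable fun p : Nat.Primes ↦ ‖(p : ℂ) ^ (-(σ : ℂ)) / ((Real.log p ^ m : ℝ) : ℂ)‖ ^ 2 := by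
  have hprimes : Summable fun p : Nat.Primes ↦ (p : ℝ) ^ (-(2 * σ)) :=
    Nat.Primes.summable_rpow.mpr (by linarith)
  refine (hprimes.mul_left (((Real.log 2 ^ m)⁻¹) ^ 2)).of_nonneg_of_le (fun _ ↦ sq_nonneg _)
    fun p ↦ ?_
  calc _ ≤ ((Real.log 2 ^ m)⁻¹ * (p : ℝ) ^ (-σ)) ^ 2 := by
        gcongr
        simpa only [norm_prime_cpow_neg, ofReal_re] using
          norm_div_log_prime_pow_le m p ((p : ℂ) ^ (-(σ : ℂ)))
    _ = _ := by
        rw [mul_pow, ← Real.rpow_mul_natCast p.1.cast_nonneg]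
        ring_nf

end EtaSeries

section AlmostEverywhere

variable (m : ℕ) (μ : Measure (Nat.Primes → Circle)) [IsProbabilityMeasure μ] [μ.IsHaarMeasure]

theorem ae_exists_tendsto_sum_etaTerm_primes_of_lt {σ : ℝ} (hσ : 1 / 2 < σ) :
    ∀ᵐ ω ∂μ, ∀ s : ℂ, σ < s.re → ∃ A, Tendsto
      (fun N ↦ ∑ n ∈ Finset.range N, extendPrimes (fun p ↦ etaTerm ω m s p) n) atTop (𝓝 A) := by
  filter_upwards [ae_exists_tendsto_sum_extendPrimes_mul μ
    (summable_sq_norm_prime_cpow_div_log m hσ)] with ω ⟨l, hl⟩ s hs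
  obtain ⟨C, hC⟩ := (Metric.isBounded_range_of_tendsto _ hl).exists_norm_le
  obtain ⟨A, hA⟩ := exists_tendsto_sum_cpow_mul_of_bounded
    (extendPrimes_of_not_prime _ Nat.not_prime_zero) (fun N ↦ hC _ ⟨N, rfl⟩)
    (w := s - σ) (by simpa using hs)
  refine ⟨A, hA.congr fun N ↦ Finset.sum_congr rfl fun n _ ↦ ?_⟩
  by_cases hn : n.Prime
  · have hsplit : (n : ℂ) ^ (-s) = (n : ℂ) ^ (-(s - σ)) * (n : ℂ) ^ (-(σ : ℂ)) := by
      rw [← cpow_add _ _ (Nat.cast_ne_zero.mpr hn.ne_zero)]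
      ring_nf
    simp only [extendPrimes, hn, dite_true, etaTerm_prime ω m s ⟨n, hn⟩, hsplit]
    ring
  · simp [extendPrimes_of_not_prime _ hn]

theorem ae_exists_tendsto_sum_etaTerm_primes :
    ∀ᵐ ω ∂μ, ∀ s : ℂ, 1 / 2 < s.re → ∃ A, Tendsto
      (fun N ↦ ∑ n ∈ Finset.range N, extendPrimes (fun p ↦ etaTerm ω m s p) n) atTop (𝓝 A) := by
  have hrat : ∀ᵐ ω ∂μ, ∀ q : {q : ℚ // 1 / 2 < (q : ℝ)}, ∀ s : ℂ, (q : ℝ) < s.re → ∃ A, Tendsto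
      (fun N ↦ ∑ n ∈ Finset.range N, extendPrimes (fun p ↦ etaTerm ω m s p) n) atTop (𝓝 A) :=
    ae_all_iff.mpr fun q ↦ ae_exists_tendsto_sum_etaTerm_primes_of_lt m μ q.2
  filter_upwards [hrat] with ω hω s hs
  obtain ⟨q, hq, hqs⟩ := exists_rat_btwn hs
  exact hω ⟨q, hq⟩ s hqs

end AlmostEverywhere

theorem random_eta_eq_sum_polylog_ae_general (m : ℕ)
    (μ : Measure (Nat.Primes → Circle)) [IsProbabilityMeasure μ] [μ.IsHaarMeasure] :
    ∀ᵐ ω ∂μ, ∀ s : ℂ, 1 / 2 < s.re → ∃ L : ℂ,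
      Tendsto (fun N : ℕ ↦ ∑ n ∈ Finset.range N,
          (ArithmeticFunction.vonMangoldt n : ℂ) * omegaMul ω n /
            ((n : ℂ) ^ s * (((Real.log n) ^ (m + 1) : ℝ) : ℂ)))
        atTop (𝓝 L) ∧
      Tendsto (fun N : ℕ ↦ ∑ p ∈ Finset.range N,
          if h : p.Prime then
            polylog m ((p : ℂ) ^ (-s) * (ω ⟨p, h⟩ : ℂ)) / (((Real.log p) ^ m : ℝ) : ℂ)
          else 0)
        atTop (𝓝 L) := by
  filter_upwards [ae_exists_tendsto_sum_etaTerm_primes m μ] with ω hω s hs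
  obtain ⟨A, hA⟩ := hω s hs
  have hT := (summable_etaTerm_prime_pow ω m hs).hasSum
  have hpolylog := tendsto_sum_tsum_prime_pow_of_tendsto_sum_primes hT hA
  simp_rw [tsum_etaTerm_prime_pow] at hpolylog
  exact ⟨_, tendsto_sum_prime_pow_of_tendsto_sum_primes
    (fun n hn ↦ etaTerm_of_not_isPrimePow ω m s hn) hT hA, hpolylog⟩

theorem random_eta_eq_sum_polylog_ae
    (σ₀ : ℝ) (hσ₀ : 1 / 2 < σ₀) (hσ₀' : σ₀ < 1) (m : ℕ)
    (μ : Measure (Nat.Primes → Circle)) [IsProbabilityMeasure μ] [μ.IsHaarMeasure] :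
    ∀ᵐ ω ∂μ, ∀ s : ℂ, σ₀ < s.re → ∃ L : ℂ,
      Tendsto (fun N : ℕ => ∑ n ∈ Finset.range N,
          (ArithmeticFunction.vonMangoldt n : ℂ) * omegaMul ω n /
            ((n : ℂ) ^ s * (((Real.log n) ^ (m + 1) : ℝ) : ℂ)))
        atTop (nhds L) ∧
      Tendsto (fun N : ℕ => ∑ p ∈ Finset.range N,
          if h : p.Prime then
            polylog m ((p : ℂ) ^ (-s) * (ω ⟨p, h⟩ : ℂ)) / (((Real.log p) ^ m : ℝ) : ℂ)
          else 0)
        atTop (nhds L) := by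
  filter_upwards [random_eta_eq_sum_polylog_ae_general m μ] with ω hω s hs using
    hω s (hσ₀.trans hs)
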